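/- arXiv:2501.04853 — 3 statements merged into one kernel-verified Lean document; each statement's English description precedes it below -/
import Mathlib

section
/- (Supplementary lemma: IPW identification under outcome-dependent missingness.) Fix d = (d1,d2) in {(1,1),(0,1),(1,0)} and d' = (0,0), with P(D = d) > 0. Suppose Assumption DID holds for d and for d', Assumption MAR′ holds, P(D = d | X) > 0 and P(D = d' | X) > 0 a.s., and all displayed expectations are finite. Then E[p_d(X)]^{-1} · E[(S/q(D2, ΔY, X)) · (1{D = d} − (p_d(X)/p_{d'}(X)) · 1{D = d'}) · ΔY] = τ_{dd'}. -/
open MeasureTheory Set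
open scoped Classical

noncomputable section

namespace DIDMissing

variable {Ω : Type*} {𝓧 : Type*}

/-- Real-valued indicator of a set. -/
def ind (A : Set Ω) : Ω → ℝ := A.indicator fun _ => (1 : ℝ)

/-- All treatment paths `{0,1}²` (coded as reals). -/
def allPaths : Set (ℝ × ℝ) := {(0, 0), (0, 1), (1, 0), (1, 1)}

/-- The three treated paths `{(1,1), (0,1), (1,0)}`. -/
def threePaths : Set (ℝ × ℝ) := {(1, 1), (0, 1), (1, 0)}

/-- The event `{D = d}` for a treatment path `d = (d₁, d₂)`. -/
def evD (D1 D2 : Ω → ℝ) (d : ℝ × ℝ) : Set Ω := {ω | D1 ω = d.1 ∧ D2 ω = d.2}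

/-- The event `{D₂ = b}`. -/
def evD2 (D2 : Ω → ℝ) (b : ℝ) : Set Ω := {ω | D2 ω = b}

/-- `g` is a (measurable-in-the-covariate) version of the conditional mean `E[Z ∣ A, X]`:
for every bounded measurable `h`, `E[1_A · Z · h(X)] = E[1_A · g(X) · h(X)]`. -/
def IsCondMeanGiven [MeasurableSpace Ω] [MeasurableSpace 𝓧] (P : Measure Ω) (X : Ω → 𝓧)
    (A : Set Ω) (Z : Ω → ℝ) (g : 𝓧 → ℝ) : Prop :=
  Measurable g ∧
    ∀ h : 𝓧 → ℝ, Measurable h → (∃ C, ∀ x, |h x| ≤ C) →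
      ∫ ω, ind A ω * Z ω * h (X ω) ∂P = ∫ ω, ind A ω * g (X ω) * h (X ω) ∂P

/-- Assumption DID for a path `d` relative to `d' = (0,0)`:
(i) no anticipation, `E[Y₀(d) ∣ D = d, X] = E[Y₀(0,0) ∣ D = d, X]` a.s., stated in the
version-free integral form; and (ii) conditional parallel trends, stated as the existence
of a common version of `E[Y₂(0,0) − Y₀(0,0) ∣ X]` and `E[Y₂(0,0) − Y₀(0,0) ∣ D = d, X]`. -/
def DID [MeasurableSpace Ω] [MeasurableSpace 𝓧] (P : Measure Ω) (X : Ω → 𝓧)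
    (D1 D2 : Ω → ℝ) (Y0p Y2p : ℝ × ℝ → Ω → ℝ) (d : ℝ × ℝ) : Prop :=
  (∀ h : 𝓧 → ℝ, Measurable h → (∃ C, ∀ x, |h x| ≤ C) →
      ∫ ω, ind (evD D1 D2 d) ω * Y0p d ω * h (X ω) ∂P
        = ∫ ω, ind (evD D1 D2 d) ω * Y0p (0, 0) ω * h (X ω) ∂P) ∧
  (∃ tr : 𝓧 → ℝ,
      IsCondMeanGiven P X Set.univ (fun ω => Y2p (0, 0) ω - Y0p (0, 0) ω) tr ∧
      IsCondMeanGiven P X (evD D1 D2 d) (fun ω => Y2p (0, 0) ω - Y0p (0, 0) ω) tr)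

/-- Assumption MAR: `S ⟂ (D₁, ΔY) ∣ (D₂, X)`, where `q d₂` is a version of the
missing-data probability `P(S = 1 ∣ D₂ = d₂, X)`, which is `(0,1]`-valued a.s. -/
def MAR [MeasurableSpace Ω] [MeasurableSpace 𝓧] (P : Measure Ω) (X : Ω → 𝓧)
    (D1 D2 S Y0 Y2 : Ω → ℝ) (q : ℝ → 𝓧 → ℝ) : Prop :=
  (∀ d2 ∈ ({0, 1} : Set ℝ), IsCondMeanGiven P X (evD2 D2 d2) S (q d2)) ∧
  (∀ d2 ∈ ({0, 1} : Set ℝ), ∀ᵐ ω ∂P, 0 < q d2 (X ω) ∧ q d2 (X ω) ≤ 1) ∧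
  (∀ d2 ∈ ({0, 1} : Set ℝ), ∀ f : ℝ × ℝ → ℝ, Measurable f → (∃ C, ∀ p, |f p| ≤ C) →
      ∀ h : 𝓧 → ℝ, Measurable h → (∃ C, ∀ x, |h x| ≤ C) →
        ∫ ω, ind (evD2 D2 d2) ω * S ω * f (D1 ω, Y2 ω - Y0 ω) * h (X ω) ∂P
          = ∫ ω, ind (evD2 D2 d2) ω * q d2 (X ω) * f (D1 ω, Y2 ω - Y0 ω) * h (X ω) ∂P)

/-- The path-dependent ATT `τ_{d,(0,0)} = E[Y₂(d) − Y₂(0,0) ∣ D = d]`. -/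
def tau [MeasurableSpace Ω] (P : Measure Ω) (D1 D2 : Ω → ℝ)
    (Y2p : ℝ × ℝ → Ω → ℝ) (d : ℝ × ℝ) : ℝ :=
  (P (evD D1 D2 d)).toReal⁻¹ * ∫ ω in evD D1 D2 d, (Y2p d ω - Y2p (0, 0) ω) ∂P

/-- Assumption MAR′: `S ⟂ D₁ ∣ (D₂, ΔY, X)`, where `qf` gives a version of the
missing-data probability `P(S = 1 ∣ D₂, ΔY, X)`, positive a.s. -/
def MARprime [MeasurableSpace Ω] [MeasurableSpace 𝓧] (P : Measure Ω) (X : Ω → 𝓧)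
    (D1 D2 S Y0 Y2 : Ω → ℝ) (qf : ℝ × ℝ × 𝓧 → ℝ) : Prop :=
  Measurable qf ∧
  (∀ h : ℝ × ℝ × 𝓧 → ℝ, Measurable h → (∃ C, ∀ p, |h p| ≤ C) →
      ∫ ω, S ω * h (D2 ω, Y2 ω - Y0 ω, X ω) ∂P
        = ∫ ω, qf (D2 ω, Y2 ω - Y0 ω, X ω) * h (D2 ω, Y2 ω - Y0 ω, X ω) ∂P) ∧
  (∀ᵐ ω ∂P, 0 < qf (D2 ω, Y2 ω - Y0 ω, X ω)) ∧
  (∀ f : ℝ → ℝ, Measurable f → (∃ C, ∀ t, |f t| ≤ C) →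
      ∀ h : ℝ × ℝ × 𝓧 → ℝ, Measurable h → (∃ C, ∀ p, |h p| ≤ C) →
        ∫ ω, S ω * f (D1 ω) * h (D2 ω, Y2 ω - Y0 ω, X ω) ∂P
          = ∫ ω, qf (D2 ω, Y2 ω - Y0 ω, X ω) * f (D1 ω) * h (D2 ω, Y2 ω - Y0 ω, X ω) ∂P)

/-!
Under MAR′, the conditional means of `S · 1{D₁ = d₁}` and `q(D₂, ΔY, X) · 1{D₁ = d₁}` given
`(D₂, ΔY, X)` agree, so the weight `S / q` cancels in every term `1{D = e} · k(D₂, ΔY, X)`. The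
remaining factor `p_d / p_{d'}` turns the covariate distribution on `{D = d'}` into the one on
`{D = d}`. Since both paths share the same conditional trend of `Y₂(0,0) − Y₀(0,0)` given `X`, the
reweighted comparison term is the mean of that trend over `{D = d}`; subtracting it from the mean
of `ΔY` over `{D = d}` and using no anticipation leaves `Y₂(d) − Y₂(0,0)`.

The hypotheses are only tested against bounded functions, while `1 / q` and `p_d / p_{d'}` are
unbounded. For nonnegative `u` and `v` with the same conditional mean given `m`, the measures with
densities `u` and `v` agree on `m`, so `u * k` and `v * k` have the same integrability and integral
for every `m`-measurable `k`. Hence integrability of the difference suffices: multiplying it by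
`1{D = d}` isolates the first term.
-/

section CondExp

variable {m mΩ : MeasurableSpace Ω} {μ : Measure Ω} {u v k q : Ω → ℝ}

lemma trim_withDensity_eq_of_condExp_ae_eq (hm : m ≤ mΩ) [SigmaFinite (μ.trim hm)]
    (hu : Integrable u μ) (hv : Integrable v μ) (hu0 : 0 ≤ᵐ[μ] u) (hv0 : 0 ≤ᵐ[μ] v)
    (huv : μ[u | m] =ᵐ[μ] μ[v | m]) :
    (μ.withDensity fun ω => ENNReal.ofReal (u ω)).trim hm =
      (μ.withDensity fun ω => ENNReal.ofReal (v ω)).trim hm := by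
  refine @Measure.ext _ m _ _ fun s hs => ?_
  have hset : ∫ ω in s, u ω ∂μ = ∫ ω in s, v ω ∂μ := by
    rw [← setIntegral_condExp hm hu hs, ← setIntegral_condExp hm hv hs]
    exact integral_congr_ae (ae_restrict_of_ae huv)
  rw [trim_measurableSet_eq hm hs, trim_measurableSet_eq hm hs, withDensity_apply _ (hm s hs),
    withDensity_apply _ (hm s hs),
    ← ofReal_integral_eq_lintegral_ofReal hu.integrableOn (ae_restrict_of_ae hu0),
    ← ofReal_integral_eq_lintegral_ofReal hv.integrableOn (ae_restrict_of_ae hv0), hset]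

lemma integrable_trim_withDensity_ofReal_iff (hm : m ≤ mΩ) (hu : AEMeasurable u μ)
    (hu0 : 0 ≤ᵐ[μ] u) (hk : StronglyMeasurable[m] k) :
    Integrable k ((μ.withDensity fun ω => ENNReal.ofReal (u ω)).trim hm) ↔
      Integrable (fun ω => u ω * k ω) μ := by
  have htoReal : (fun ω => (ENNReal.ofReal (u ω)).toReal • k ω) =ᵐ[μ] fun ω => u ω * k ω := by
    filter_upwards [hu0] with ω hω
    rw [ENNReal.toReal_ofReal hω, smul_eq_mul]
  rw [← integrable_congr htoReal, ← integrable_withDensity_iff_integrable_smul₀' hu.ennreal_ofReal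
    (Filter.Eventually.of_forall fun _ => ENNReal.ofReal_lt_top)]
  exact ⟨integrable_of_integrable_trim hm, fun h => h.trim hm hk⟩

lemma integrable_mul_iff_of_condExp_ae_eq (hm : m ≤ mΩ) [SigmaFinite (μ.trim hm)]
    (hu : Integrable u μ) (hv : Integrable v μ) (hu0 : 0 ≤ᵐ[μ] u) (hv0 : 0 ≤ᵐ[μ] v)
    (huv : μ[u | m] =ᵐ[μ] μ[v | m]) (hk : StronglyMeasurable[m] k) :
    Integrable (fun ω => u ω * k ω) μ ↔ Integrable (fun ω => v ω * k ω) μ := by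
  rw [← integrable_trim_withDensity_ofReal_iff hm hu.aemeasurable hu0 hk,
    ← integrable_trim_withDensity_ofReal_iff hm hv.aemeasurable hv0 hk,
    trim_withDensity_eq_of_condExp_ae_eq hm hu hv hu0 hv0 huv]

lemma integral_mul_eq_of_condExp_ae_eq (hm : m ≤ mΩ) [SigmaFinite (μ.trim hm)]
    (hu : Integrable u μ) (hv : Integrable v μ) (huv : μ[u | m] =ᵐ[μ] μ[v | m])
    (hk : StronglyMeasurable[m] k) (huk : Integrable (fun ω => u ω * k ω) μ)
    (hvk : Integrable (fun ω => v ω * k ω) μ) :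
    ∫ ω, u ω * k ω ∂μ = ∫ ω, v ω * k ω ∂μ := by
  have hcond : μ[u * k | m] =ᵐ[μ] μ[v * k | m] := calc
    μ[u * k | m] =ᵐ[μ] μ[u | m] * k := condExp_mul_of_stronglyMeasurable_right hk huk hu
    _ =ᵐ[μ] μ[v | m] * k := huv.mul .rfl
    _ =ᵐ[μ] μ[v * k | m] := (condExp_mul_of_stronglyMeasurable_right hk hvk hv).symm
  calc ∫ ω, u ω * k ω ∂μ = ∫ ω, (μ[u * k | m]) ω ∂μ := (integral_condExp hm).symm
    _ = ∫ ω, (μ[v * k | m]) ω ∂μ := integral_congr_ae hcond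
    _ = ∫ ω, v ω * k ω ∂μ := integral_condExp hm

lemma integral_mul_eq_of_condExp_ae_eq_of_nonneg (hm : m ≤ mΩ) [SigmaFinite (μ.trim hm)]
    (hu : Integrable u μ) (hv : Integrable v μ) (hu0 : 0 ≤ᵐ[μ] u) (hv0 : 0 ≤ᵐ[μ] v)
    (huv : μ[u | m] =ᵐ[μ] μ[v | m]) (hk : StronglyMeasurable[m] k) :
    ∫ ω, u ω * k ω ∂μ = ∫ ω, v ω * k ω ∂μ := by
  have hiff := integrable_mul_iff_of_condExp_ae_eq hm hu hv hu0 hv0 huv hk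
  by_cases huk : Integrable (fun ω => u ω * k ω) μ
  · exact integral_mul_eq_of_condExp_ae_eq hm hu hv huv hk huk (hiff.1 huk)
  · rw [integral_undef huk, integral_undef (mt hiff.2 huk)]

lemma mul_mul_div_ae_eq (hq0 : ∀ᵐ ω ∂μ, 0 < q ω) :
    (fun ω => q ω * v ω * (k ω / q ω)) =ᵐ[μ] fun ω => v ω * k ω := by
  filter_upwards [hq0] with ω hω
  have := hω.ne'
  field_simp

lemma mul_mul_ratio_ae_eq (hq0 : ∀ᵐ ω ∂μ, 0 < q ω) :
    (fun ω => q ω * (k ω * (v ω / q ω))) =ᵐ[μ] fun ω => v ω * k ω := by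
  filter_upwards [hq0] with ω hω
  have := hω.ne'
  field_simp

lemma integrable_mul_div_iff_of_condExp_ae_eq_mul (hm : m ≤ mΩ) [SigmaFinite (μ.trim hm)]
    (hu : Integrable u μ) (hqv : Integrable (fun ω => q ω * v ω) μ) (hu0 : 0 ≤ᵐ[μ] u)
    (hv0 : 0 ≤ᵐ[μ] v) (hq : StronglyMeasurable[m] q) (hq0 : ∀ᵐ ω ∂μ, 0 < q ω)
    (huqv : μ[u | m] =ᵐ[μ] μ[fun ω => q ω * v ω | m]) (hk : StronglyMeasurable[m] k) :
    Integrable (fun ω => u ω * (k ω / q ω)) μ ↔ Integrable (fun ω => v ω * k ω) μ := by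
  have hqv0 : 0 ≤ᵐ[μ] fun ω => q ω * v ω := by
    filter_upwards [hq0, hv0] with ω hqω hvω using mul_nonneg hqω.le hvω
  exact (integrable_mul_iff_of_condExp_ae_eq hm hu hqv hu0 hqv0 huqv (hk.div hq)).trans
    (integrable_congr (mul_mul_div_ae_eq hq0))

lemma integral_mul_div_eq_of_condExp_ae_eq_mul (hm : m ≤ mΩ) [SigmaFinite (μ.trim hm)]
    (hu : Integrable u μ) (hqv : Integrable (fun ω => q ω * v ω) μ) (hu0 : 0 ≤ᵐ[μ] u)
    (hv0 : 0 ≤ᵐ[μ] v) (hq : StronglyMeasurable[m] q) (hq0 : ∀ᵐ ω ∂μ, 0 < q ω)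
    (huqv : μ[u | m] =ᵐ[μ] μ[fun ω => q ω * v ω | m]) (hk : StronglyMeasurable[m] k) :
    ∫ ω, u ω * (k ω / q ω) ∂μ = ∫ ω, v ω * k ω ∂μ := by
  have hqv0 : 0 ≤ᵐ[μ] fun ω => q ω * v ω := by
    filter_upwards [hq0, hv0] with ω hqω hvω using mul_nonneg hqω.le hvω
  exact (integral_mul_eq_of_condExp_ae_eq_of_nonneg hm hu hqv hu0 hqv0 huqv (hk.div hq)).trans
    (integral_congr_ae (mul_mul_div_ae_eq hq0))

end CondExp

section TestFunctions

variable {E : Type*} [MeasurableSpace Ω] [mE : MeasurableSpace E] {μ : Measure Ω} {G : Ω → E}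
  {u v w : Ω → ℝ} {g : E → ℝ}

lemma condExp_comap_ae_eq_of_forall_integral_mul_eq [IsFiniteMeasure μ] (hG : Measurable G)
    (hu : Integrable u μ) (hv : Integrable v μ)
    (huv : ∀ h : E → ℝ, Measurable h → (∃ C, ∀ x, |h x| ≤ C) →
      ∫ ω, u ω * h (G ω) ∂μ = ∫ ω, v ω * h (G ω) ∂μ) :
    μ[u | mE.comap G] =ᵐ[μ] μ[v | mE.comap G] := by
  refine ae_eq_condExp_of_forall_setIntegral_eq hG.comap_le hv
    (fun s _ _ => integrable_condExp.integrableOn) ?_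
    stronglyMeasurable_condExp.aestronglyMeasurable
  rintro _ ⟨T, hT, rfl⟩ -
  have hind : ∀ f : Ω → ℝ, (fun ω => f ω * T.indicator 1 (G ω)) = (G ⁻¹' T).indicator f := by
    intro f
    ext ω
    by_cases hω : G ω ∈ T <;> simp [hω]
  have htest := huv (T.indicator 1) (measurable_one.indicator hT)
    ⟨1, fun x => by by_cases hx : x ∈ T <;> simp [hx]⟩
  rw [hind, hind, integral_indicator (hG hT), integral_indicator (hG hT)] at htest
  rw [setIntegral_condExp hG.comap_le hu ⟨T, hT, rfl⟩, htest]

lemma aecover_preimage_abs_le (hG : Measurable G) (hg : Measurable g) :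
    AECover μ Filter.atTop fun n : ℕ => G ⁻¹' {x | |g x| ≤ n} where
  ae_eventually_mem := Filter.Eventually.of_forall fun ω => by
    obtain ⟨N, hN⟩ := exists_nat_ge |g (G ω)|
    filter_upwards [Filter.eventually_ge_atTop N] with n hn
    exact hN.trans (Nat.cast_le.2 hn)
  measurableSet n := hG (measurableSet_le hg.abs measurable_const)

-- Testing against the sign of `g` on `{|g| ≤ n}` bounds the truncated `L¹` norms by that of `u`.
lemma integrable_mul_comp_of_forall_integral_mul_eq (hG : Measurable G) (hu : Integrable u μ)
    (hw : Integrable w μ) (hw0 : 0 ≤ w) (hg : Measurable g)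
    (hug : ∀ h : E → ℝ, Measurable h → (∃ C, ∀ x, |h x| ≤ C) →
      ∫ ω, u ω * h (G ω) ∂μ = ∫ ω, w ω * g (G ω) * h (G ω) ∂μ) :
    Integrable (fun ω => w ω * g (G ω)) μ := by
  let B : ℕ → Set E := fun n => {x | |g x| ≤ n}
  let σ : ℕ → E → ℝ := fun n => (B n).indicator fun x => g x / |g x|
  have hB : ∀ n, MeasurableSet (B n) := fun n => measurableSet_le hg.abs measurable_const
  have hσm : ∀ n, Measurable (σ n) := fun n => (hg.div hg.abs).indicator (hB n)
  have hσ1 : ∀ n x, |σ n x| ≤ 1 := by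
    intro n x
    by_cases hx : x ∈ B n <;> simp [σ, hx, abs_div, div_self_le_one]
  refine (aecover_preimage_abs_le hG hg).integrable_of_integral_norm_bounded (∫ ω, |u ω| ∂μ)
    (fun n => ?_) (Filter.Eventually.of_forall fun n => ?_)
  · refine IntegrableOn.congr_fun ?_ ?_ (hG (hB n)) (f := fun ω => w ω * (B n).indicator g (G ω))
    · refine (hw.mul_bdd (c := n) ((hg.indicator (hB n)).comp hG).aestronglyMeasurable
        (Filter.Eventually.of_forall fun ω => ?_)).integrableOn
      by_cases hω : G ω ∈ B n
      · rw [Function.comp_apply, indicator_of_mem hω]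
        exact hω
      · simp [hω]
    · intro ω (hω : G ω ∈ B n)
      simp [hω]
  have hnorm : (G ⁻¹' B n).indicator (fun ω => ‖w ω * g (G ω)‖) =
      fun ω => w ω * g (G ω) * σ n (G ω) := by
    ext ω
    by_cases hω : G ω ∈ B n
    · have hsign : g (G ω) * (g (G ω) / |g (G ω)|) = |g (G ω)| := by
        rw [← mul_div_assoc, ← abs_mul_abs_self, mul_self_div_self]
      simp [σ, hω, abs_of_nonneg (hw0 ω), mul_assoc, hsign]
    · simp [σ, hω]
  calc ∫ ω in G ⁻¹' B n, ‖w ω * g (G ω)‖ ∂μ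
      = ∫ ω, u ω * σ n (G ω) ∂μ := by
        rw [← integral_indicator (hG (hB n)), hnorm, hug _ (hσm n) ⟨1, hσ1 n⟩]
    _ ≤ ∫ ω, |u ω| ∂μ := by
        refine integral_mono (hu.mul_bdd ((hσm n).comp hG).aestronglyMeasurable
          (Filter.Eventually.of_forall fun ω => hσ1 n (G ω))) hu.abs fun ω => ?_
        calc u ω * σ n (G ω) ≤ |u ω| * |σ n (G ω)| := by
              rw [← abs_mul]; exact le_abs_self _
          _ ≤ |u ω| := mul_le_of_le_one_right (abs_nonneg _) (hσ1 n _)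

end TestFunctions

section Indicator

lemma ind_mul_eq_indicator (A : Set Ω) (Z : Ω → ℝ) :
    (fun ω => ind A ω * Z ω) = A.indicator Z := by
  ext ω
  by_cases hω : ω ∈ A <;> simp [ind, hω]

lemma ind_nonneg (A : Set Ω) : 0 ≤ ind A := fun _ => indicator_nonneg (fun _ _ => zero_le_one) _

lemma abs_ind_le_one (A : Set Ω) (ω : Ω) : |ind A ω| ≤ 1 := by
  by_cases hω : ω ∈ A <;> simp [ind, hω]

lemma ind_mul_self (A : Set Ω) (ω : Ω) : ind A ω * ind A ω = ind A ω := by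
  by_cases hω : ω ∈ A <;> simp [ind, hω]

variable [MeasurableSpace Ω] {P : Measure Ω} {A : Set Ω} {Z : Ω → ℝ}

lemma measurable_ind (hA : MeasurableSet A) : Measurable (ind A) :=
  measurable_const.indicator hA

lemma integrable_ind [IsFiniteMeasure P] (hA : MeasurableSet A) : Integrable (ind A) P :=
  (integrable_const 1).indicator hA

lemma integrable_ind_mul (hA : MeasurableSet A) (hZ : Integrable Z P) :
    Integrable (fun ω => ind A ω * Z ω) P := by
  rw [ind_mul_eq_indicator]
  exact hZ.indicator hA

lemma integral_ind_mul (hA : MeasurableSet A) :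
    ∫ ω, ind A ω * Z ω ∂P = ∫ ω in A, Z ω ∂P := by
  rw [ind_mul_eq_indicator, integral_indicator hA]

end Indicator

namespace IsCondMeanGiven

variable [MeasurableSpace Ω] [m𝓧 : MeasurableSpace 𝓧] {P : Measure Ω}
  {X : Ω → 𝓧} {A B : Set Ω} {Z : Ω → ℝ} {g p p' k : 𝓧 → ℝ}

lemma congr_ae {g' : 𝓧 → ℝ} (hg : IsCondMeanGiven P X A Z g) (hg' : Measurable g')
    (hgg' : (fun ω => g (X ω)) =ᵐ[P] fun ω => g' (X ω)) : IsCondMeanGiven P X A Z g' := by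
  refine ⟨hg', fun h hh hC => (hg.2 h hh hC).trans (integral_congr_ae ?_)⟩
  filter_upwards [hgg'] with ω hω
  rw [hω]

lemma integral_comp_eq_measureReal (hp : IsCondMeanGiven P X univ (ind A) p)
    (hA : MeasurableSet A) : ∫ ω, p (X ω) ∂P = P.real A := by
  have htest := hp.2 1 measurable_one ⟨1, by simp⟩
  simpa [ind, integral_indicator hA] using htest.symm

lemma stronglyMeasurable_comp (hg : IsCondMeanGiven P X A Z g) :
    StronglyMeasurable[m𝓧.comap X] fun ω => g (X ω) :=
  (hg.1.comp (comap_measurable X)).stronglyMeasurable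

variable [IsFiniteMeasure P]

lemma integrable_ind_mul_comp (hg : IsCondMeanGiven P X A Z g) (hX : Measurable X)
    (hA : MeasurableSet A) (hZ : Integrable Z P) :
    Integrable (fun ω => ind A ω * g (X ω)) P :=
  integrable_mul_comp_of_forall_integral_mul_eq hX (integrable_ind_mul hA hZ) (integrable_ind hA)
    (ind_nonneg A) hg.1 hg.2

lemma integrable_comp (hg : IsCondMeanGiven P X univ Z g) (hX : Measurable X)
    (hZ : Integrable Z P) : Integrable (fun ω => g (X ω)) P := by
  simpa [ind] using hg.integrable_ind_mul_comp hX .univ hZ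

lemma condExp_ind_mul_ae_eq (hg : IsCondMeanGiven P X A Z g) (hX : Measurable X)
    (hA : MeasurableSet A) (hZ : Integrable Z P) :
    P[fun ω => ind A ω * Z ω | m𝓧.comap X] =ᵐ[P]
      P[fun ω => ind A ω * g (X ω) | m𝓧.comap X] :=
  condExp_comap_ae_eq_of_forall_integral_mul_eq hX (integrable_ind_mul hA hZ)
    (hg.integrable_ind_mul_comp hX hA hZ) hg.2

lemma comp_ae_eq_condExp (hg : IsCondMeanGiven P X univ Z g) (hX : Measurable X)
    (hZ : Integrable Z P) : (fun ω => g (X ω)) =ᵐ[P] P[Z | m𝓧.comap X] := by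
  have hcond := hg.condExp_ind_mul_ae_eq hX .univ hZ
  simp only [ind, indicator_univ, one_mul] at hcond
  rw [condExp_of_stronglyMeasurable hX.comap_le hg.stronglyMeasurable_comp
    (hg.integrable_comp hX hZ)] at hcond
  exact hcond.symm

lemma condExp_ae_eq_condExp_comp (hg : IsCondMeanGiven P X univ Z g) (hX : Measurable X)
    (hZ : Integrable Z P) :
    P[Z | m𝓧.comap X] =ᵐ[P] P[fun ω => g (X ω) | m𝓧.comap X] := by
  simpa [ind] using hg.condExp_ind_mul_ae_eq hX .univ hZ

lemma ae_eq_of_univ {g' : 𝓧 → ℝ} (hg : IsCondMeanGiven P X univ Z g)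
    (hg' : IsCondMeanGiven P X univ Z g') (hX : Measurable X) (hZ : Integrable Z P) :
    (fun ω => g (X ω)) =ᵐ[P] fun ω => g' (X ω) :=
  (hg.comp_ae_eq_condExp hX hZ).trans (hg'.comp_ae_eq_condExp hX hZ).symm

lemma comp_nonneg (hg : IsCondMeanGiven P X univ Z g) (hX : Measurable X)
    (hZ : Integrable Z P) (hZ0 : 0 ≤ᵐ[P] Z) : 0 ≤ᵐ[P] fun ω => g (X ω) :=
  (condExp_nonneg hZ0).trans_eq (hg.comp_ae_eq_condExp hX hZ).symm

lemma integrable_ind_mul_comp_iff (hp : IsCondMeanGiven P X univ (ind A) p) (hX : Measurable X)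
    (hA : MeasurableSet A) (hk : Measurable k) :
    Integrable (fun ω => ind A ω * k (X ω)) P ↔ Integrable (fun ω => p (X ω) * k (X ω)) P :=
  integrable_mul_iff_of_condExp_ae_eq hX.comap_le (integrable_ind hA)
    (hp.integrable_comp hX (integrable_ind hA)) (.of_forall (ind_nonneg A))
    (hp.comp_nonneg hX (integrable_ind hA) (.of_forall (ind_nonneg A)))
    (hp.condExp_ae_eq_condExp_comp hX (integrable_ind hA))
    (hk.comp (comap_measurable X)).stronglyMeasurable

lemma integral_ind_mul_comp_eq (hp : IsCondMeanGiven P X univ (ind A) p) (hX : Measurable X)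
    (hA : MeasurableSet A) (hk : Measurable k) :
    ∫ ω, ind A ω * k (X ω) ∂P = ∫ ω, p (X ω) * k (X ω) ∂P :=
  integral_mul_eq_of_condExp_ae_eq_of_nonneg hX.comap_le (integrable_ind hA)
    (hp.integrable_comp hX (integrable_ind hA)) (.of_forall (ind_nonneg A))
    (hp.comp_nonneg hX (integrable_ind hA) (.of_forall (ind_nonneg A)))
    (hp.condExp_ae_eq_condExp_comp hX (integrable_ind hA))
    (hk.comp (comap_measurable X)).stronglyMeasurable

lemma integrable_ind_mul_ratio_iff (hp : IsCondMeanGiven P X univ (ind A) p)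
    (hp' : IsCondMeanGiven P X univ (ind B) p') (hX : Measurable X) (hA : MeasurableSet A)
    (hB : MeasurableSet B) (hp'0 : ∀ᵐ ω ∂P, 0 < p' (X ω)) (hk : Measurable k) :
    Integrable (fun ω => ind B ω * (k (X ω) * (p (X ω) / p' (X ω)))) P ↔
      Integrable (fun ω => ind A ω * k (X ω)) P := by
  rw [hp'.integrable_ind_mul_comp_iff (k := fun x => k x * (p x / p' x)) hX hB
      (hk.mul (hp.1.div hp'.1)),
    integrable_congr (mul_mul_ratio_ae_eq hp'0), hp.integrable_ind_mul_comp_iff hX hA hk]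

lemma integral_ind_mul_ratio_eq (hp : IsCondMeanGiven P X univ (ind A) p)
    (hp' : IsCondMeanGiven P X univ (ind B) p') (hX : Measurable X) (hA : MeasurableSet A)
    (hB : MeasurableSet B) (hp'0 : ∀ᵐ ω ∂P, 0 < p' (X ω)) (hk : Measurable k) :
    ∫ ω, ind B ω * (k (X ω) * (p (X ω) / p' (X ω))) ∂P = ∫ ω, ind A ω * k (X ω) ∂P := by
  rw [hp'.integral_ind_mul_comp_eq (k := fun x => k x * (p x / p' x)) hX hB
      (hk.mul (hp.1.div hp'.1)),
    integral_congr_ae (mul_mul_ratio_ae_eq hp'0), hp.integral_ind_mul_comp_eq hX hA hk]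

lemma integral_ind_mul_ratio_eq_of_common (hgA : IsCondMeanGiven P X A Z g)
    (hgB : IsCondMeanGiven P X B Z g) (hp : IsCondMeanGiven P X univ (ind A) p)
    (hp' : IsCondMeanGiven P X univ (ind B) p') (hX : Measurable X) (hA : MeasurableSet A)
    (hB : MeasurableSet B) (hZ : Integrable Z P) (hp'0 : ∀ᵐ ω ∂P, 0 < p' (X ω))
    (hZr : Integrable (fun ω => ind B ω * (Z ω * (p (X ω) / p' (X ω)))) P) :
    ∫ ω, ind B ω * (Z ω * (p (X ω) / p' (X ω))) ∂P = ∫ ω, ind A ω * Z ω ∂P := by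
  have hgr : Integrable (fun ω => ind B ω * (g (X ω) * (p (X ω) / p' (X ω)))) P :=
    (hp.integrable_ind_mul_ratio_iff hp' hX hA hB hp'0 hgA.1).2
      (hgA.integrable_ind_mul_comp hX hA hZ)
  have hratio : StronglyMeasurable[m𝓧.comap X] fun ω => p (X ω) / p' (X ω) :=
    ((hp.1.div hp'.1).comp (comap_measurable X)).stronglyMeasurable
  calc ∫ ω, ind B ω * (Z ω * (p (X ω) / p' (X ω))) ∂P
      = ∫ ω, ind B ω * (g (X ω) * (p (X ω) / p' (X ω))) ∂P := by
        simp only [← mul_assoc] at hZr hgr ⊢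
        exact integral_mul_eq_of_condExp_ae_eq hX.comap_le (integrable_ind_mul hB hZ)
          (hgB.integrable_ind_mul_comp hX hB hZ) (hgB.condExp_ind_mul_ae_eq hX hB hZ) hratio hZr hgr
    _ = ∫ ω, ind A ω * g (X ω) ∂P :=
        hp.integral_ind_mul_ratio_eq hp' hX hA hB hp'0 hgA.1
    _ = ∫ ω, ind A ω * Z ω ∂P := by
        simpa using (hgA.2 1 measurable_one ⟨1, by simp⟩).symm

end IsCondMeanGiven

section Paths

variable {D1 D2 : Ω → ℝ} {d e : ℝ × ℝ}

lemma ind_evD_eq_mul (D1 D2 : Ω → ℝ) (e : ℝ × ℝ) (ω : Ω) :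
    ind (evD D1 D2 e) ω = ind {e.1} (D1 ω) * ind {e.2} (D2 ω) := by
  by_cases h1 : D1 ω = e.1 <;> by_cases h2 : D2 ω = e.2 <;> simp [ind, evD, h1, h2]

lemma ind_evD_mul_ind_evD_of_ne (hde : d ≠ e) (ω : Ω) :
    ind (evD D1 D2 d) ω * ind (evD D1 D2 e) ω = 0 := by
  have hdisj : Disjoint (evD D1 D2 d) (evD D1 D2 e) :=
    Set.disjoint_left.2 fun _ hd he => hde (Prod.ext (hd.1.symm.trans he.1) (hd.2.symm.trans he.2))
  by_cases hd : ω ∈ evD D1 D2 d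
  · simp [ind, hdisj.notMem_of_mem_left hd]
  · simp [ind, hd]

lemma measurableSet_evD [MeasurableSpace Ω] (hD1 : Measurable D1) (hD2 : Measurable D2)
    (e : ℝ × ℝ) :
    MeasurableSet (evD D1 D2 e) :=
  (measurableSet_eq_fun hD1 measurable_const).inter (measurableSet_eq_fun hD2 measurable_const)

lemma ind_evD_mul_sub_of_consistent {Y0 Y2 : Ω → ℝ} {Y0p Y2p : ℝ × ℝ → Ω → ℝ}
    (hcons0 : ∀ ω, Y0 ω = Y0p (D1 ω, D2 ω) ω) (hcons2 : ∀ ω, Y2 ω = Y2p (D1 ω, D2 ω) ω)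
    (e : ℝ × ℝ) (ω : Ω) :
    ind (evD D1 D2 e) ω * (Y2 ω - Y0 ω) = ind (evD D1 D2 e) ω * (Y2p e ω - Y0p e ω) := by
  by_cases hω : ω ∈ evD D1 D2 e
  · have hD : (D1 ω, D2 ω) = e := Prod.ext hω.1 hω.2
    rw [hcons0, hcons2, hD]
  · simp [ind, hω]

end Paths

namespace DID

variable [MeasurableSpace Ω] [MeasurableSpace 𝓧] {P : Measure Ω} {X : Ω → 𝓧} {D1 D2 : Ω → ℝ}
  {Y0p Y2p : ℝ × ℝ → Ω → ℝ} {d e : ℝ × ℝ}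

lemma exists_common_trend [IsFiniteMeasure P] (hd : DID P X D1 D2 Y0p Y2p d)
    (he : DID P X D1 D2 Y0p Y2p e) (hX : Measurable X) (hY0p : Integrable (Y0p (0, 0)) P)
    (hY2p : Integrable (Y2p (0, 0)) P) :
    ∃ tr : 𝓧 → ℝ,
      IsCondMeanGiven P X (evD D1 D2 d) (fun ω => Y2p (0, 0) ω - Y0p (0, 0) ω) tr ∧
      IsCondMeanGiven P X (evD D1 D2 e) (fun ω => Y2p (0, 0) ω - Y0p (0, 0) ω) tr := by
  obtain ⟨-, tr, htr, htrd⟩ := hd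
  obtain ⟨-, tr', htr', htre⟩ := he
  exact ⟨tr, htrd, htre.congr_ae htr.1 (htr'.ae_eq_of_univ htr hX (hY2p.sub hY0p))⟩

lemma integral_ind_mul_sub_eq (hd : DID P X D1 D2 Y0p Y2p d)
    (hA : MeasurableSet (evD D1 D2 d)) {W : Ω → ℝ} (hW : Integrable W P)
    (hYd : Integrable (Y0p d) P) (hY0 : Integrable (Y0p (0, 0)) P) :
    ∫ ω, ind (evD D1 D2 d) ω * (W ω - Y0p d ω) ∂P =
      ∫ ω, ind (evD D1 D2 d) ω * (W ω - Y0p (0, 0) ω) ∂P := by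
  have htest := hd.1 1 measurable_one ⟨1, by simp⟩
  simp only [Pi.one_apply, mul_one] at htest
  simp only [mul_sub]
  rw [integral_sub (integrable_ind_mul hA hW) (integrable_ind_mul hA hYd),
    integral_sub (integrable_ind_mul hA hW) (integrable_ind_mul hA hY0), htest]

end DID

/-- The vector `(D₂, ΔY, X)`, given which the observation indicator `S` and the first treatment
`D₁` are independent under Assumption MAR′. -/
def missingnessVec (X : Ω → 𝓧) (D2 Y0 Y2 : Ω → ℝ) (ω : Ω) : ℝ × ℝ × 𝓧 :=
  (D2 ω, Y2 ω - Y0 ω, X ω)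

lemma measurable_missingnessVec [MeasurableSpace Ω] [MeasurableSpace 𝓧] {X : Ω → 𝓧}
    {D2 Y0 Y2 : Ω → ℝ} (hX : Measurable X) (hD2 : Measurable D2) (hY0 : Measurable Y0)
    (hY2 : Measurable Y2) : Measurable (missingnessVec X D2 Y0 Y2) :=
  hD2.prodMk ((hY2.sub hY0).prodMk hX)

lemma ind_evD_mul_eq {X : Ω → 𝓧} {D1 D2 Y0 Y2 : Ω → ℝ} {k : ℝ × ℝ × 𝓧 → ℝ}
    (e : ℝ × ℝ) (ω : Ω) :
    ind (evD D1 D2 e) ω * k (missingnessVec X D2 Y0 Y2 ω) =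
      ind {e.1} (D1 ω) * (ind {e.2} (missingnessVec X D2 Y0 Y2 ω).1 *
        k (missingnessVec X D2 Y0 Y2 ω)) := by
  rw [ind_evD_eq_mul, mul_assoc, missingnessVec]

lemma div_mul_ind_evD_mul_eq {X : Ω → 𝓧} {D1 D2 S Y0 Y2 : Ω → ℝ} {qf k : ℝ × ℝ × 𝓧 → ℝ}
    (e : ℝ × ℝ) (ω : Ω) :
    S ω / qf (missingnessVec X D2 Y0 Y2 ω) *
        (ind (evD D1 D2 e) ω * k (missingnessVec X D2 Y0 Y2 ω)) =
      S ω * ind {e.1} (D1 ω) * (ind {e.2} (missingnessVec X D2 Y0 Y2 ω).1 *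
        k (missingnessVec X D2 Y0 Y2 ω) / qf (missingnessVec X D2 Y0 Y2 ω)) := by
  rw [ind_evD_mul_eq]
  ring

namespace MARprime

variable [MeasurableSpace Ω] [MeasurableSpace 𝓧] {P : Measure Ω} [IsFiniteMeasure P]
  {X : Ω → 𝓧} {D1 D2 S Y0 Y2 : Ω → ℝ} {qf k : ℝ × ℝ × 𝓧 → ℝ} {f : ℝ → ℝ} {C : ℝ}

lemma integrable_comp (hM : MARprime P X D1 D2 S Y0 Y2 qf)
    (hV : Measurable (missingnessVec X D2 Y0 Y2)) (hS : Integrable S P) :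
    Integrable (fun ω => qf (missingnessVec X D2 Y0 Y2 ω)) P := by
  simpa using integrable_mul_comp_of_forall_integral_mul_eq (w := 1) hV hS (integrable_const 1)
    zero_le_one hM.1 fun h hh hC => by simpa using! hM.2.1 h hh hC

lemma integrable_comp_mul (hM : MARprime P X D1 D2 S Y0 Y2 qf)
    (hV : Measurable (missingnessVec X D2 Y0 Y2)) (hD1 : Measurable D1) (hS : Integrable S P)
    (hf : Measurable f) (hfC : ∀ t, |f t| ≤ C) :
    Integrable (fun ω => qf (missingnessVec X D2 Y0 Y2 ω) * f (D1 ω)) P :=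
  (hM.integrable_comp hV hS).mul_bdd (hf.comp hD1).aestronglyMeasurable
    (.of_forall fun ω => hfC (D1 ω))

lemma condExp_mul_ae_eq (hM : MARprime P X D1 D2 S Y0 Y2 qf)
    (hV : Measurable (missingnessVec X D2 Y0 Y2)) (hD1 : Measurable D1) (hS : Integrable S P)
    (hf : Measurable f) (hfC : ∀ t, |f t| ≤ C) :
    P[fun ω => S ω * f (D1 ω) | MeasurableSpace.comap (missingnessVec X D2 Y0 Y2) inferInstance]
      =ᵐ[P] P[fun ω => qf (missingnessVec X D2 Y0 Y2 ω) * f (D1 ω) |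
        MeasurableSpace.comap (missingnessVec X D2 Y0 Y2) inferInstance] :=
  condExp_comap_ae_eq_of_forall_integral_mul_eq hV
    (hS.mul_bdd (hf.comp hD1).aestronglyMeasurable
      (.of_forall fun ω => hfC (D1 ω)))
    (hM.integrable_comp_mul hV hD1 hS hf hfC) (hM.2.2.2 f hf ⟨C, hfC⟩)

lemma integrable_mul_div_iff (hM : MARprime P X D1 D2 S Y0 Y2 qf)
    (hV : Measurable (missingnessVec X D2 Y0 Y2)) (hD1 : Measurable D1) (hS : Integrable S P)
    (hS0 : 0 ≤ᵐ[P] S) (hf : Measurable f) (hf0 : 0 ≤ f) (hfC : ∀ t, |f t| ≤ C)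
    (hk : Measurable k) :
    Integrable (fun ω => S ω * f (D1 ω) *
        (k (missingnessVec X D2 Y0 Y2 ω) / qf (missingnessVec X D2 Y0 Y2 ω))) P ↔
      Integrable (fun ω => f (D1 ω) * k (missingnessVec X D2 Y0 Y2 ω)) P :=
  integrable_mul_div_iff_of_condExp_ae_eq_mul hV.comap_le
    (hS.mul_bdd (hf.comp hD1).aestronglyMeasurable
      (.of_forall fun ω => hfC (D1 ω)))
    (hM.integrable_comp_mul hV hD1 hS hf hfC)
    (hS0.mono fun _ hω => mul_nonneg hω (hf0 _)) (.of_forall fun _ => hf0 _)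
    (hM.1.comp (comap_measurable _)).stronglyMeasurable hM.2.2.1
    (hM.condExp_mul_ae_eq hV hD1 hS hf hfC) (hk.comp (comap_measurable _)).stronglyMeasurable

lemma integral_mul_div_eq (hM : MARprime P X D1 D2 S Y0 Y2 qf)
    (hV : Measurable (missingnessVec X D2 Y0 Y2)) (hD1 : Measurable D1) (hS : Integrable S P)
    (hS0 : 0 ≤ᵐ[P] S) (hf : Measurable f) (hf0 : 0 ≤ f) (hfC : ∀ t, |f t| ≤ C)
    (hk : Measurable k) :
    ∫ ω, S ω * f (D1 ω) *
        (k (missingnessVec X D2 Y0 Y2 ω) / qf (missingnessVec X D2 Y0 Y2 ω)) ∂P =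
      ∫ ω, f (D1 ω) * k (missingnessVec X D2 Y0 Y2 ω) ∂P :=
  integral_mul_div_eq_of_condExp_ae_eq_mul hV.comap_le
    (hS.mul_bdd (hf.comp hD1).aestronglyMeasurable
      (.of_forall fun ω => hfC (D1 ω)))
    (hM.integrable_comp_mul hV hD1 hS hf hfC)
    (hS0.mono fun _ hω => mul_nonneg hω (hf0 _)) (.of_forall fun _ => hf0 _)
    (hM.1.comp (comap_measurable _)).stronglyMeasurable hM.2.2.1
    (hM.condExp_mul_ae_eq hV hD1 hS hf hfC) (hk.comp (comap_measurable _)).stronglyMeasurable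

lemma integrable_div_mul_ind_evD_iff (hM : MARprime P X D1 D2 S Y0 Y2 qf)
    (hV : Measurable (missingnessVec X D2 Y0 Y2)) (hD1 : Measurable D1) (hS : Integrable S P)
    (hS0 : 0 ≤ᵐ[P] S) (hk : Measurable k) (e : ℝ × ℝ) :
    Integrable (fun ω => S ω / qf (missingnessVec X D2 Y0 Y2 ω) *
        (ind (evD D1 D2 e) ω * k (missingnessVec X D2 Y0 Y2 ω))) P ↔
      Integrable (fun ω => ind (evD D1 D2 e) ω * k (missingnessVec X D2 Y0 Y2 ω)) P := by
  simp only [div_mul_ind_evD_mul_eq]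
  simp only [ind_evD_mul_eq]
  exact hM.integrable_mul_div_iff hV hD1 hS hS0 (measurable_ind (.singleton e.1)) (ind_nonneg _)
    (abs_ind_le_one _) (((measurable_ind (.singleton e.2)).comp measurable_fst).mul hk)

lemma integral_div_mul_ind_evD_eq (hM : MARprime P X D1 D2 S Y0 Y2 qf)
    (hV : Measurable (missingnessVec X D2 Y0 Y2)) (hD1 : Measurable D1) (hS : Integrable S P)
    (hS0 : 0 ≤ᵐ[P] S) (hk : Measurable k) (e : ℝ × ℝ) :
    ∫ ω, S ω / qf (missingnessVec X D2 Y0 Y2 ω) *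
        (ind (evD D1 D2 e) ω * k (missingnessVec X D2 Y0 Y2 ω)) ∂P =
      ∫ ω, ind (evD D1 D2 e) ω * k (missingnessVec X D2 Y0 Y2 ω) ∂P := by
  simp only [div_mul_ind_evD_mul_eq]
  simp only [ind_evD_mul_eq]
  exact hM.integral_mul_div_eq hV hD1 hS hS0 (measurable_ind (.singleton e.1)) (ind_nonneg _)
    (abs_ind_le_one _) (((measurable_ind (.singleton e.2)).comp measurable_fst).mul hk)

end MARprime

section Contrast

/-- The inverse-probability weighted integrand
`(S / q(D₂, ΔY, X)) · (1{D = d} − r(X) · 1{D = e}) · ΔY` contrasting the paths `d` and `e`, with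
an arbitrary covariate weight `r` on the comparison path. -/
def ipwContrast (X : Ω → 𝓧) (D1 D2 S Y0 Y2 : Ω → ℝ) (qf : ℝ × ℝ × 𝓧 → ℝ) (r : 𝓧 → ℝ)
    (d e : ℝ × ℝ) (ω : Ω) : ℝ :=
  S ω / qf (D2 ω, Y2 ω - Y0 ω, X ω) * (ind (evD D1 D2 d) ω - r (X ω) * ind (evD D1 D2 e) ω) *
    (Y2 ω - Y0 ω)

variable {X : Ω → 𝓧} {D1 D2 S Y0 Y2 : Ω → ℝ} {qf : ℝ × ℝ × 𝓧 → ℝ} {r : 𝓧 → ℝ} {d e : ℝ × ℝ}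

lemma ind_mul_ipwContrast_left (hde : d ≠ e) (ω : Ω) :
    ind (evD D1 D2 d) ω * ipwContrast X D1 D2 S Y0 Y2 qf r d e ω =
      S ω / qf (missingnessVec X D2 Y0 Y2 ω) * (ind (evD D1 D2 d) ω * (Y2 ω - Y0 ω)) := by
  unfold ipwContrast missingnessVec
  linear_combination (S ω / qf (D2 ω, Y2 ω - Y0 ω, X ω) * (Y2 ω - Y0 ω)) *
    (ind_mul_self (evD D1 D2 d) ω - r (X ω) * ind_evD_mul_ind_evD_of_ne hde ω)

lemma ipwContrast_eq_sub (ω : Ω) :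
    ipwContrast X D1 D2 S Y0 Y2 qf r d e ω =
      S ω / qf (missingnessVec X D2 Y0 Y2 ω) * (ind (evD D1 D2 d) ω * (Y2 ω - Y0 ω)) -
      S ω / qf (missingnessVec X D2 Y0 Y2 ω) *
        (ind (evD D1 D2 e) ω * ((Y2 ω - Y0 ω) * r (X ω))) := by
  unfold ipwContrast missingnessVec
  ring

variable [MeasurableSpace Ω] [MeasurableSpace 𝓧] {P : Measure Ω} [IsFiniteMeasure P]

lemma integrable_ind_evD_mul_of_ipwContrast (hM : MARprime P X D1 D2 S Y0 Y2 qf)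
    (hX : Measurable X) (hD1 : Measurable D1) (hD2 : Measurable D2) (hY0 : Measurable Y0)
    (hY2 : Measurable Y2) (hS : Integrable S P) (hS0 : 0 ≤ᵐ[P] S) (hr : Measurable r)
    (hde : d ≠ e) (hF : Integrable (ipwContrast X D1 D2 S Y0 Y2 qf r d e) P) :
    Integrable (fun ω => ind (evD D1 D2 d) ω * (Y2 ω - Y0 ω)) P ∧
      Integrable (fun ω => ind (evD D1 D2 e) ω * ((Y2 ω - Y0 ω) * r (X ω))) P := by
  have hV := measurable_missingnessVec hX hD2 hY0 hY2
  have hleft : Integrable (fun ω => S ω / qf (missingnessVec X D2 Y0 Y2 ω) *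
      (ind (evD D1 D2 d) ω * (Y2 ω - Y0 ω))) P := by
    simpa only [ind_mul_ipwContrast_left hde] using
      integrable_ind_mul (measurableSet_evD hD1 hD2 d) hF
  have hright : Integrable (fun ω => S ω / qf (missingnessVec X D2 Y0 Y2 ω) *
      (ind (evD D1 D2 e) ω * ((Y2 ω - Y0 ω) * r (X ω)))) P := by
    refine (hleft.sub hF).congr (.of_forall fun ω => ?_)
    rw [Pi.sub_apply, ipwContrast_eq_sub, sub_sub_cancel]
  exact ⟨(hM.integrable_div_mul_ind_evD_iff (k := fun p => p.2.1) hV hD1 hS hS0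
      measurable_snd.fst d).1 hleft,
    (hM.integrable_div_mul_ind_evD_iff (k := fun p => p.2.1 * r p.2.2) hV hD1 hS hS0
      (measurable_snd.fst.mul (hr.comp measurable_snd.snd)) e).1 hright⟩

lemma integral_ipwContrast_eq (hM : MARprime P X D1 D2 S Y0 Y2 qf)
    (hX : Measurable X) (hD1 : Measurable D1) (hD2 : Measurable D2) (hY0 : Measurable Y0)
    (hY2 : Measurable Y2) (hS : Integrable S P) (hS0 : 0 ≤ᵐ[P] S) (hr : Measurable r)
    (hde : d ≠ e) (hF : Integrable (ipwContrast X D1 D2 S Y0 Y2 qf r d e) P) :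
    ∫ ω, ipwContrast X D1 D2 S Y0 Y2 qf r d e ω ∂P =
      ∫ ω, ind (evD D1 D2 d) ω * (Y2 ω - Y0 ω) ∂P -
        ∫ ω, ind (evD D1 D2 e) ω * ((Y2 ω - Y0 ω) * r (X ω)) ∂P := by
  have hV := measurable_missingnessVec hX hD2 hY0 hY2
  have hk : Measurable fun p : ℝ × ℝ × 𝓧 => p.2.1 * r p.2.2 :=
    measurable_snd.fst.mul (hr.comp measurable_snd.snd)
  obtain ⟨hd, he⟩ := integrable_ind_evD_mul_of_ipwContrast hM hX hD1 hD2 hY0 hY2 hS hS0 hr hde hF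
  have hd' := (hM.integrable_div_mul_ind_evD_iff (k := fun p => p.2.1) hV hD1 hS hS0
    measurable_snd.fst d).2 hd
  have he' := (hM.integrable_div_mul_ind_evD_iff hV hD1 hS hS0 hk e).2 he
  simp only [ipwContrast_eq_sub]
  exact (integral_sub hd' he').trans (congrArg₂ _
    (hM.integral_div_mul_ind_evD_eq (k := fun p => p.2.1) hV hD1 hS hS0 measurable_snd.fst d)
    (hM.integral_div_mul_ind_evD_eq hV hD1 hS hS0 hk e))

end Contrast

lemma zero_zero_mem_allPaths : ((0, 0) : ℝ × ℝ) ∈ allPaths := .inl rfl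

lemma threePaths_subset_allPaths : threePaths ⊆ allPaths := by
  rintro _ (rfl | rfl | rfl) <;> simp [allPaths]

lemma ne_zero_zero_of_mem_threePaths {d : ℝ × ℝ} (hd : d ∈ threePaths) : d ≠ (0, 0) := by
  rcases hd with rfl | rfl | rfl <;> simp

theorem statement_11_general
    [MeasurableSpace Ω] [MeasurableSpace 𝓧] (P : Measure Ω) [IsFiniteMeasure P]
    (X : Ω → 𝓧) (hX : Measurable X) (Y0 Y2 D1 D2 S : Ω → ℝ)
    (hY0 : Measurable Y0) (hY2 : Measurable Y2) (hD1 : Measurable D1) (hD2 : Measurable D2)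
    (hS : Integrable S P) (hS0 : 0 ≤ᵐ[P] S) (Y0p Y2p : ℝ × ℝ → Ω → ℝ) (d : ℝ × ℝ)
    (hd : d ≠ (0, 0)) (hY0d : Integrable (Y0p d) P) (hY00 : Integrable (Y0p (0, 0)) P)
    (hY2d : Integrable (Y2p d) P) (hY20 : Integrable (Y2p (0, 0)) P)
    (hcons0 : ∀ ω, Y0 ω = Y0p (D1 ω, D2 ω) ω) (hcons2 : ∀ ω, Y2 ω = Y2p (D1 ω, D2 ω) ω)
    (hDIDd : DID P X D1 D2 Y0p Y2p d) (hDIDd' : DID P X D1 D2 Y0p Y2p (0, 0))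
    (qf : ℝ × ℝ × 𝓧 → ℝ) (hMAR' : MARprime P X D1 D2 S Y0 Y2 qf) (pd pd' : 𝓧 → ℝ)
    (hpd : IsCondMeanGiven P X univ (ind (evD D1 D2 d)) pd)
    (hpd' : IsCondMeanGiven P X univ (ind (evD D1 D2 (0, 0))) pd')
    (hpd'pos : ∀ᵐ ω ∂P, 0 < pd' (X ω))
    (hfin : Integrable
      (ipwContrast X D1 D2 S Y0 Y2 qf (fun x => pd x / pd' x) d (0, 0)) P) :
    ∫ ω, ipwContrast X D1 D2 S Y0 Y2 qf (fun x => pd x / pd' x) d (0, 0) ω ∂P =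
      ∫ ω in evD D1 D2 d, (Y2p d ω - Y2p (0, 0) ω) ∂P := by
  have hA := measurableSet_evD hD1 hD2
  have hcons := ind_evD_mul_sub_of_consistent hcons0 hcons2
  have hr : Measurable fun x => pd x / pd' x := hpd.1.div hpd'.1
  obtain ⟨tr, htrd, htr0⟩ := hDIDd.exists_common_trend hDIDd' hX hY00 hY20
  obtain ⟨-, hint0⟩ :=
    integrable_ind_evD_mul_of_ipwContrast hMAR' hX hD1 hD2 hY0 hY2 hS hS0 hr hd hfin
  have htreated : ∫ ω, ind (evD D1 D2 d) ω * (Y2 ω - Y0 ω) ∂P =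
      ∫ ω in evD D1 D2 d, (Y2p d ω - Y0p (0, 0) ω) ∂P := by
    simp only [hcons]
    rw [hDIDd.integral_ind_mul_sub_eq (hA d) hY2d hY0d hY00, integral_ind_mul (hA d)]
  have hcontrol : ∫ ω, ind (evD D1 D2 (0, 0)) ω * ((Y2 ω - Y0 ω) * (pd (X ω) / pd' (X ω))) ∂P =
      ∫ ω in evD D1 D2 d, (Y2p (0, 0) ω - Y0p (0, 0) ω) ∂P := by
    simp only [← mul_assoc, hcons] at hint0 ⊢
    simp only [mul_assoc] at hint0 ⊢
    rw [htrd.integral_ind_mul_ratio_eq_of_common htr0 hpd hpd' hX (hA d) (hA _) (hY20.sub hY00)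
      hpd'pos hint0, integral_ind_mul (hA d)]
  rw [integral_ipwContrast_eq hMAR' hX hD1 hD2 hY0 hY2 hS hS0 hr hd hfin, htreated, hcontrol]
  exact (integral_sub (hY2d.sub hY00).integrableOn (hY20.sub hY00).integrableOn).symm.trans
    (by simp only [Pi.sub_apply, sub_sub_sub_cancel_right])

/-- Supplementary Lemma: IPW identification of the PDATT under outcome-dependent
missingness (Assumption MAR′). -/
theorem statement_11
    [MeasurableSpace Ω] [m𝓧 : MeasurableSpace 𝓧]
    (P : Measure Ω) [IsProbabilityMeasure P]
    (X : Ω → 𝓧) (hX : Measurable X)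
    (Y0 Y2 D1 D2 S : Ω → ℝ)
    (hY0 : Measurable Y0) (hY2 : Measurable Y2)
    (hD1 : Measurable D1) (hD2 : Measurable D2) (hS : Measurable S)
    (hY0i : Integrable Y0 P) (hY2i : Integrable Y2 P)
    (hD1v : ∀ ω, D1 ω = 0 ∨ D1 ω = 1) (hD2v : ∀ ω, D2 ω = 0 ∨ D2 ω = 1)
    (hSv : ∀ ω, S ω = 0 ∨ S ω = 1)
    (Y0p Y2p : ℝ × ℝ → Ω → ℝ)
    (hY0p : ∀ e ∈ allPaths, Measurable (Y0p e) ∧ Integrable (Y0p e) P)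
    (hY2p : ∀ e ∈ allPaths, Measurable (Y2p e) ∧ Integrable (Y2p e) P)
    (hcons0 : ∀ ω, Y0 ω = Y0p (D1 ω, D2 ω) ω)
    (hcons2 : ∀ ω, Y2 ω = Y2p (D1 ω, D2 ω) ω)
    (d : ℝ × ℝ) (hd : d ∈ threePaths) (hPd : 0 < P (evD D1 D2 d))
    (hDIDd : DID P X D1 D2 Y0p Y2p d) (hDIDd' : DID P X D1 D2 Y0p Y2p (0, 0))
    (qf : ℝ × ℝ × 𝓧 → ℝ) (hMAR' : MARprime P X D1 D2 S Y0 Y2 qf)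
    (pd pd' : 𝓧 → ℝ)
    (hpd : IsCondMeanGiven P X Set.univ (ind (evD D1 D2 d)) pd)
    (hpd' : IsCondMeanGiven P X Set.univ (ind (evD D1 D2 (0, 0))) pd')
    (hpdpos : ∀ᵐ ω ∂P, 0 < pd (X ω)) (hpd'pos : ∀ᵐ ω ∂P, 0 < pd' (X ω))
    (hpdi : Integrable (fun ω => pd (X ω)) P)
    (hfin : Integrable (fun ω =>
        S ω / qf (D2 ω, Y2 ω - Y0 ω, X ω)
          * (ind (evD D1 D2 d) ω - pd (X ω) / pd' (X ω) * ind (evD D1 D2 (0, 0)) ω)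
          * (Y2 ω - Y0 ω)) P) :
    (∫ ω, pd (X ω) ∂P)⁻¹
        * ∫ ω, S ω / qf (D2 ω, Y2 ω - Y0 ω, X ω)
            * (ind (evD D1 D2 d) ω - pd (X ω) / pd' (X ω) * ind (evD D1 D2 (0, 0)) ω)
            * (Y2 ω - Y0 ω) ∂P
      = tau P D1 D2 Y2p d := by
  have hSI : ∀ᵐ ω ∂P, S ω ∈ Icc 0 1 :=
    .of_forall fun ω => by rcases hSv ω with h | h <;> simp [h]
  have hd' := threePaths_subset_allPaths hd
  rw [tau, hpd.integral_comp_eq_measureReal (measurableSet_evD hD1 hD2 d)]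
  exact congrArg _ <| statement_11_general P X hX Y0 Y2 D1 D2 S hY0 hY2 hD1 hD2
    (.of_mem_Icc 0 1 hS.aemeasurable hSI) (hSI.mono fun _ h => h.1) Y0p Y2p d
    (ne_zero_zero_of_mem_threePaths hd) (hY0p d hd').2 (hY0p _ zero_zero_mem_allPaths).2
    (hY2p d hd').2 (hY2p _ zero_zero_mem_allPaths).2 hcons0 hcons2 hDIDd hDIDd' qf hMAR' pd pd'
    hpd hpd' hpd'pos hfin

end DIDMissing
end
end

section
/- (Identification of the propensity score under outcome-dependent missingness.) Fix a path d = (d1,d2) in {0,1}^2. Suppose Assumption MAR′ holds and (S/q(D2, ΔY, X)) · 1{D = d} is integrable. Then p_d(X) = E[(S/q(D2, ΔY, X)) · 1{D = d} | X] a.s., where E[· | X] is conditional expectation given σ(X). -/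
open MeasureTheory Set
open scoped Classical

noncomputable section

namespace DIDMissing

variable {Ω : Type*} {𝓧 : Type*}

/-! The weight `S / q(W)`, `W = (D₂, ΔY, X)`, is harmless already given `W`: formally
`E[S · Z ∣ W] = q(W) E[Z ∣ W]` for `Z = 1{D = d}`, and one divides by `q(W)`. As `1 / q(W)` is not
bounded, the division is carried out on the `σ(W)`-measurable events `{c ≤ |q(W)|}`, which exhaust
the space up to a null set as `c ↓ 0`. The tower property then passes from `σ(W)` to `σ(X)`. -/

section ConditionalRatio

variable {𝓦 : Type*} {m : MeasurableSpace Ω} [mΩ : MeasurableSpace Ω]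
  [m𝓦 : MeasurableSpace 𝓦] {P : Measure Ω} {W : Ω → 𝓦} {V Z : Ω → ℝ} {q : 𝓦 → ℝ}

/-- `q(W)` is a version of the ratio `E[V ∣ W] / E[Z ∣ W]` of conditional means: the undivided
relation `E[V ∣ W] = q(W) E[Z ∣ W]`, tested against bounded measurable functions of `W`. It is used
with `V = S · Z` and `q(W)` the selection probability. -/
def IsCondMeanRatio (P : Measure Ω) (W : Ω → 𝓦) (V Z : Ω → ℝ) (q : 𝓦 → ℝ) : Prop :=
  ∀ h : 𝓦 → ℝ, Measurable h → (∃ C, ∀ w, |h w| ≤ C) →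
    ∫ ω, V ω * h (W ω) ∂P = ∫ ω, q (W ω) * Z ω * h (W ω) ∂P

namespace IsCondMeanRatio

theorem mul_comp (hVZ : IsCondMeanRatio P W V Z q) {g : 𝓦 → ℝ} (hg : Measurable g)
    (hgb : ∃ C, ∀ w, |g w| ≤ C) :
    IsCondMeanRatio P W (fun ω => V ω * g (W ω)) (fun ω => Z ω * g (W ω)) q := by
  rintro h hh ⟨C, hC⟩
  obtain ⟨K, hK⟩ := hgb
  have hbound : ∀ w, |g w * h w| ≤ K * C := fun w => by
    rw [abs_mul]
    exact mul_le_mul (hK w) (hC w) (abs_nonneg _) ((abs_nonneg _).trans (hK w))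
  simpa only [mul_assoc] using hVZ (fun w => g w * h w) (hg.mul hh) ⟨K * C, hbound⟩

theorem setIntegral_div (hVZ : IsCondMeanRatio P W V Z q) (hW : Measurable W)
    (hq : Measurable q) {B : Set 𝓦} (hB : MeasurableSet B) {c : ℝ} (hc : 0 < c)
    (hcB : ∀ w ∈ B, c ≤ |q w|) :
    ∫ ω in W ⁻¹' B, V ω / q (W ω) ∂P = ∫ ω in W ⁻¹' B, Z ω ∂P := by
  have hbound : ∀ w, |B.indicator q⁻¹ w| ≤ c⁻¹ := fun w => by
    by_cases hw : w ∈ B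
    · rw [indicator_of_mem hw, Pi.inv_apply, abs_inv]
      exact inv_anti₀ hc (hcB w hw)
    · rw [indicator_of_notMem hw, abs_zero]
      exact (inv_pos.2 hc).le
  calc ∫ ω in W ⁻¹' B, V ω / q (W ω) ∂P
      = ∫ ω, V ω * B.indicator q⁻¹ (W ω) ∂P := by
        rw [← integral_indicator (hW hB)]
        congr with ω
        by_cases hω : W ω ∈ B <;> simp [hω, div_eq_mul_inv]
    _ = ∫ ω, q (W ω) * Z ω * B.indicator q⁻¹ (W ω) ∂P :=
        hVZ _ (hq.inv.indicator hB) ⟨c⁻¹, hbound⟩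
    _ = ∫ ω in W ⁻¹' B, Z ω ∂P := by
        rw [← integral_indicator (hW hB)]
        congr with ω
        by_cases hω : W ω ∈ B
        · have hne : q (W ω) ≠ 0 := abs_pos.1 (hc.trans_le (hcB _ hω))
          simp [hω, mul_right_comm _ (Z ω), hne]
        · simp [hω]

theorem condExp_div_ae_eq_of_le_abs (hVZ : IsCondMeanRatio P W V Z q) (hW : Measurable W)
    [SigmaFinite (P.trim hW.comap_le)] (hq : Measurable q) (hZ : Integrable Z P)
    (hV : Integrable (fun ω => V ω / q (W ω)) P) {c : ℝ} (hc : 0 < c) :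
    ∀ᵐ ω ∂P, c ≤ |q (W ω)| →
      (P[fun ω => V ω / q (W ω)|m𝓦.comap W]) ω = (P[Z|m𝓦.comap W]) ω := by
  let T : Set 𝓦 := {w | c ≤ |q w|}
  have hT : MeasurableSet T := measurableSet_le measurable_const hq.abs
  have hWT : MeasurableSet[m𝓦.comap W] (W ⁻¹' T) := ⟨T, hT, rfl⟩
  have htrunc : P[(W ⁻¹' T).indicator fun ω => V ω / q (W ω)|m𝓦.comap W]
      =ᵐ[P] P[(W ⁻¹' T).indicator Z|m𝓦.comap W] := by
    refine ae_eq_condExp_of_forall_setIntegral_eq hW.comap_le (hZ.indicator (hW hT))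
      (fun _ _ _ => integrable_condExp.integrableOn) ?_
      stronglyMeasurable_condExp.aestronglyMeasurable
    rintro _ ⟨B, hB, rfl⟩ -
    rw [setIntegral_condExp hW.comap_le (hV.indicator (hW hT)) ⟨B, hB, rfl⟩,
      setIntegral_indicator (hW hT), setIntegral_indicator (hW hT), ← preimage_inter]
    exact hVZ.setIntegral_div hW hq (hB.inter hT) hc fun w hw => hw.2
  filter_upwards [htrunc, condExp_indicator hV hWT, condExp_indicator hZ hWT]
    with ω hω hωV hωZ hωT
  have hmem : ω ∈ W ⁻¹' T := hωT
  rwa [hωV, hωZ, indicator_of_mem hmem, indicator_of_mem hmem] at hω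

theorem condExp_div_ae_eq (hVZ : IsCondMeanRatio P W V Z q) (hW : Measurable W)
    [SigmaFinite (P.trim hW.comap_le)] (hq : Measurable q) (hq0 : ∀ᵐ ω ∂P, q (W ω) ≠ 0)
    (hZ : Integrable Z P) (hV : Integrable (fun ω => V ω / q (W ω)) P) :
    P[fun ω => V ω / q (W ω)|m𝓦.comap W] =ᵐ[P] P[Z|m𝓦.comap W] := by
  have hlevel := ae_all_iff.2 fun n : ℕ =>
    hVZ.condExp_div_ae_eq_of_le_abs hW hq hZ hV (Nat.one_div_pos_of_nat (n := n))
  filter_upwards [hlevel, hq0] with ω hω hω0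
  obtain ⟨n, hn⟩ := exists_nat_one_div_lt (abs_pos.2 hω0)
  exact hω n hn.le

theorem condExp_div_ae_eq_of_le (hVZ : IsCondMeanRatio P W V Z q) (hW : Measurable W)
    [SigmaFinite (P.trim hW.comap_le)] (hq : Measurable q) (hq0 : ∀ᵐ ω ∂P, q (W ω) ≠ 0)
    (hZ : Integrable Z P) (hV : Integrable (fun ω => V ω / q (W ω)) P)
    (hm : m ≤ m𝓦.comap W) :
    P[fun ω => V ω / q (W ω)|m] =ᵐ[P] P[Z|m] :=
  calc P[fun ω => V ω / q (W ω)|m]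
      =ᵐ[P] P[P[fun ω => V ω / q (W ω)|m𝓦.comap W]|m] :=
        (condExp_condExp_of_le hm hW.comap_le).symm
    _ =ᵐ[P] P[P[Z|m𝓦.comap W]|m] :=
        condExp_congr_ae (hVZ.condExp_div_ae_eq hW hq hq0 hZ hV)
    _ =ᵐ[P] P[Z|m] := condExp_condExp_of_le hm hW.comap_le

end IsCondMeanRatio

end ConditionalRatio

section Treatment

theorem ind_evD (D1 D2 : Ω → ℝ) (d : ℝ × ℝ) (ω : Ω) :
    ind (evD D1 D2 d) ω = indicator {d.1} 1 (D1 ω) * indicator {d.2} 1 (D2 ω) := by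
  by_cases h1 : D1 ω = d.1 <;> by_cases h2 : D2 ω = d.2 <;> simp [ind, evD, h1, h2]

theorem abs_indicator_one_le {α : Type*} (s : Set α) (a : α) :
    |s.indicator (1 : α → ℝ) a| ≤ 1 := by
  by_cases ha : a ∈ s <;> simp [ha]

variable [MeasurableSpace Ω] [m𝓧 : MeasurableSpace 𝓧] {P : Measure Ω} {X : Ω → 𝓧}
  {Y0 Y2 D1 D2 S : Ω → ℝ} {qf : ℝ × ℝ × 𝓧 → ℝ}

theorem integrable_ind_evD [IsFiniteMeasure P] (hD1 : Measurable D1) (hD2 : Measurable D2)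
    (d : ℝ × ℝ) : Integrable (ind (evD D1 D2 d)) P :=
  (integrable_const 1).indicator
    ((hD1 (measurableSet_singleton d.1)).inter (hD2 (measurableSet_singleton d.2)))

theorem MARprime.isCondMeanRatio_ind_evD (hMAR' : MARprime P X D1 D2 S Y0 Y2 qf) (d : ℝ × ℝ) :
    IsCondMeanRatio P (fun ω => (D2 ω, Y2 ω - Y0 ω, X ω))
      (fun ω => S ω * ind (evD D1 D2 d) ω) (ind (evD D1 D2 d)) qf := by
  obtain ⟨-, -, -, hindep⟩ := hMAR'
  have hD1 : IsCondMeanRatio P (fun ω => (D2 ω, Y2 ω - Y0 ω, X ω))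
      (fun ω => S ω * indicator {d.1} 1 (D1 ω)) (fun ω => indicator {d.1} 1 (D1 ω)) qf :=
    hindep _ (measurable_one.indicator (measurableSet_singleton d.1)) ⟨1, abs_indicator_one_le _⟩
  have hD := hD1.mul_comp
    ((measurable_one.indicator (measurableSet_singleton d.2)).comp measurable_fst)
    ⟨1, fun w => abs_indicator_one_le _ w.1⟩
  simpa only [Function.comp_apply, mul_assoc, ← ind_evD] using hD

theorem statement_12_general [IsFiniteMeasure P] (hX : Measurable X) (hY0 : Measurable Y0)
    (hY2 : Measurable Y2) (hD1 : Measurable D1) (hD2 : Measurable D2) (d : ℝ × ℝ)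
    (hMAR' : MARprime P X D1 D2 S Y0 Y2 qf)
    (hint : Integrable
      (fun ω => S ω / qf (D2 ω, Y2 ω - Y0 ω, X ω) * ind (evD D1 D2 d) ω) P) :
    P[ind (evD D1 D2 d)|m𝓧.comap X] =ᵐ[P]
      P[fun ω => S ω / qf (D2 ω, Y2 ω - Y0 ω, X ω) * ind (evD D1 D2 d) ω|m𝓧.comap X] := by
  have hW : Measurable fun ω => (D2 ω, Y2 ω - Y0 ω, X ω) :=
    hD2.prodMk ((hY2.sub hY0).prodMk hX)
  have hXW : Measurable[MeasurableSpace.comap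
      (fun ω => (D2 ω, Y2 ω - Y0 ω, X ω)) inferInstance] X :=
    (measurable_snd.comp measurable_snd).comp (comap_measurable _)
  have hq0 : ∀ᵐ ω ∂P, qf (D2 ω, Y2 ω - Y0 ω, X ω) ≠ 0 := hMAR'.2.2.1.mono fun _ => ne_of_gt
  simp only [div_mul_eq_mul_div] at hint ⊢
  exact ((hMAR'.isCondMeanRatio_ind_evD d).condExp_div_ae_eq_of_le hW hMAR'.1 hq0
    (integrable_ind_evD hD1 hD2 d) hint hXW.comap_le).symm

end Treatment

/-- Identification of the propensity score under outcome-dependent missingness: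
`p_d(X) = E[(S / q(D₂, ΔY, X)) · 1{D = d} ∣ σ(X)]` a.s. -/
theorem statement_12
    [MeasurableSpace Ω] [m𝓧 : MeasurableSpace 𝓧]
    (P : Measure Ω) [IsProbabilityMeasure P]
    (X : Ω → 𝓧) (hX : Measurable X)
    (Y0 Y2 D1 D2 S : Ω → ℝ)
    (hY0 : Measurable Y0) (hY2 : Measurable Y2)
    (hD1 : Measurable D1) (hD2 : Measurable D2) (hS : Measurable S)
    (hY0i : Integrable Y0 P) (hY2i : Integrable Y2 P)
    (hD1v : ∀ ω, D1 ω = 0 ∨ D1 ω = 1) (hD2v : ∀ ω, D2 ω = 0 ∨ D2 ω = 1)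
    (hSv : ∀ ω, S ω = 0 ∨ S ω = 1)
    (d : ℝ × ℝ) (hd : d ∈ allPaths)
    (qf : ℝ × ℝ × 𝓧 → ℝ) (hMAR' : MARprime P X D1 D2 S Y0 Y2 qf)
    (hint : Integrable
        (fun ω => S ω / qf (D2 ω, Y2 ω - Y0 ω, X ω) * ind (evD D1 D2 d) ω) P) :
    P[ind (evD D1 D2 d)|MeasurableSpace.comap X m𝓧]
      =ᵐ[P]
    P[fun ω => S ω / qf (D2 ω, Y2 ω - Y0 ω, X ω) * ind (evD D1 D2 d) ω|
        MeasurableSpace.comap X m𝓧] :=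
  statement_12_general hX hY0 hY2 hD1 hD2 d hMAR' hint

end DIDMissing
end
end

section
/- (Vanishing of the adjustment term with a correct missing-data model.) Fix d2 in {0,1} with P(D2 = d2) > 0. Suppose Assumption MAR holds, let π_{d1|d2} be a measurable (0,1)-valued function of X, suppose the denominators E[π_{d1|d2}(X) · 1{D2 = d2}] and E[(S/q_{d2}(X)) · π_{d1|d2}(X) · 1{D2 = d2}] are finite and strictly positive, and define w3 = π_{d1|d2}(X) · 1{D2 = d2} / E[π_{d1|d2}(X) · 1{D2 = d2}] and w4 = (S/q_{d2}(X)) · π_{d1|d2}(X) · 1{D2 = d2} / E[(S/q_{d2}(X)) · π_{d1|d2}(X) · 1{D2 = d2}]. Then for every bounded measurable function g of X, E[(w3 − w4) · g(X)] = 0. -/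
open MeasureTheory Set
open scoped Classical

noncomputable section

namespace DIDMissing

variable {Ω : Type*} {𝓧 : Type*}

/-- Numerator of the Hájek weight `w₁`. -/
def n1 (X : Ω → 𝓧) (D1 D2 S : Ω → ℝ) (φ2 : 𝓧 → ℝ) (d : ℝ × ℝ) : Ω → ℝ :=
  fun ω => S ω / φ2 (X ω) * ind (evD D1 D2 d) ω

/-- Numerator of the Hájek weight `w₂`. -/
def n2 (X : Ω → 𝓧) (D1 D2 S : Ω → ℝ) (φ0 πc πc' π2 π0 : 𝓧 → ℝ) : Ω → ℝ :=
  fun ω => S ω / φ0 (X ω) * (πc (X ω) * π2 (X ω) / (πc' (X ω) * π0 (X ω)))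
    * ind (evD D1 D2 (0, 0)) ω

/-- Numerator of the Hájek weight `w₃`. -/
def n3 (X : Ω → 𝓧) (D2 : Ω → ℝ) (πc : 𝓧 → ℝ) (d2 : ℝ) : Ω → ℝ :=
  fun ω => πc (X ω) * ind (evD2 D2 d2) ω

/-- Numerator of the Hájek weight `w₄`. -/
def n4 (X : Ω → 𝓧) (D2 S : Ω → ℝ) (φ2 πc : 𝓧 → ℝ) (d2 : ℝ) : Ω → ℝ :=
  fun ω => S ω / φ2 (X ω) * πc (X ω) * ind (evD2 D2 d2) ω

/-- The robust estimand `τ^R_{d,(0,0)}`. -/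
def tauR [MeasurableSpace Ω] (P : Measure Ω) (X : Ω → 𝓧) (D1 D2 S Y0 Y2 : Ω → ℝ)
    (d : ℝ × ℝ) (μd μd' πc πc' π2 π0 φ2 φ0 : 𝓧 → ℝ) : ℝ :=
  (∫ ω, (n1 X D1 D2 S φ2 d ω / ∫ ω', n1 X D1 D2 S φ2 d ω' ∂P
        - n2 X D1 D2 S φ0 πc πc' π2 π0 ω / ∫ ω', n2 X D1 D2 S φ0 πc πc' π2 π0 ω' ∂P)
      * (Y2 ω - Y0 ω - μd' (X ω)) ∂P)
  + ∫ ω, (n3 X D2 πc d.2 ω / ∫ ω', n3 X D2 πc d.2 ω' ∂P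
        - n4 X D2 S φ2 πc d.2 ω / ∫ ω', n4 X D2 S φ2 πc d.2 ω' ∂P)
      * (μd (X ω) - μd' (X ω)) ∂P

/- Truncating an integrable test function `r` to `{|r| ≤ n}` gives bounded test functions, and the
truncated integrals converge as `n → ∞`. Taking `r = π g / q` shows that the numerators of `w₃`
and `w₄` have the same integral against every `g(X)`. The case `g = 1` says that the normalizing
constants agree, so the difference of the normalized weights integrates `g(X)` to zero. -/

section

variable [MeasurableSpace Ω] [MeasurableSpace 𝓧] {P : Measure Ω} {X : Ω → 𝓧}

lemma aecover_norm_le_natCast {E : Type*} [NormedAddCommGroup E] [MeasurableSpace E]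
    [OpensMeasurableSpace E] {f : Ω → E} (hf : Measurable f) :
    AECover P Filter.atTop fun n : ℕ => {ω | ‖f ω‖ ≤ n} where
  ae_eventually_mem := .of_forall fun ω =>
    tendsto_natCast_atTop_atTop.eventually_ge_atTop ‖f ω‖
  measurableSet _ := measurableSet_le hf.norm measurable_const

lemma setIntegral_preimage_mul_comp {R : Type*} [NormedRing R] [NormedSpace ℝ R]
    (hX : Measurable X) (N : Ω → R) (r : 𝓧 → R) {B : Set 𝓧} (hB : MeasurableSet B) :
    ∫ ω in X ⁻¹' B, N ω * r (X ω) ∂P = ∫ ω, N ω * B.indicator r (X ω) ∂P := by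
  rw [← integral_indicator (hX hB)]
  congr 1 with ω
  by_cases hω : X ω ∈ B <;> simp [hω]

lemma IsCondMeanGiven.integral_mul_comp {A : Set Ω} {Z : Ω → ℝ} {q r : 𝓧 → ℝ}
    (hq : IsCondMeanGiven P X A Z q) (hX : Measurable X) (hr : Measurable r)
    (hZr : Integrable (fun ω => ind A ω * Z ω * r (X ω)) P)
    (hqr : Integrable (fun ω => ind A ω * q (X ω) * r (X ω)) P) :
    ∫ ω, ind A ω * Z ω * r (X ω) ∂P = ∫ ω, ind A ω * q (X ω) * r (X ω) ∂P := by
  have hcover : AECover P Filter.atTop fun n : ℕ => X ⁻¹' {x | ‖r x‖ ≤ n} :=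
    aecover_norm_le_natCast (hr.comp hX)
  have htrunc (n : ℕ) :
      ∫ ω in X ⁻¹' {x | ‖r x‖ ≤ n}, ind A ω * Z ω * r (X ω) ∂P
        = ∫ ω in X ⁻¹' {x | ‖r x‖ ≤ n}, ind A ω * q (X ω) * r (X ω) ∂P := by
    have hB : MeasurableSet {x | ‖r x‖ ≤ n} := measurableSet_le hr.norm measurable_const
    have hbound (x : 𝓧) : |{x | ‖r x‖ ≤ n}.indicator r x| ≤ n := by
      rw [indicator_apply]
      split_ifs with hx
      · exact hx
      · simp
    rw [setIntegral_preimage_mul_comp hX _ r hB, setIntegral_preimage_mul_comp hX _ r hB]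
    exact hq.2 _ (hr.indicator hB) ⟨n, hbound⟩
  refine tendsto_nhds_unique (hcover.integral_tendsto_of_countably_generated hZr) ?_
  simpa only [htrunc] using hcover.integral_tendsto_of_countably_generated hqr

lemma IsCondMeanGiven.integral_div_mul_comp {A : Set Ω} {Z : Ω → ℝ} {q r : 𝓧 → ℝ}
    (hq : IsCondMeanGiven P X A Z q) (hX : Measurable X) (hr : Measurable r)
    (hq0 : ∀ᵐ ω ∂P, ω ∈ A → q (X ω) ≠ 0)
    (hZr : Integrable (fun ω => Z ω / q (X ω) * r (X ω) * ind A ω) P)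
    (hri : Integrable (fun ω => r (X ω) * ind A ω) P) :
    ∫ ω, Z ω / q (X ω) * r (X ω) * ind A ω ∂P = ∫ ω, r (X ω) * ind A ω ∂P := by
  have hleft : (fun ω => Z ω / q (X ω) * r (X ω) * ind A ω)
      = fun ω => ind A ω * Z ω * (r (X ω) / q (X ω)) := by
    ext ω; ring
  have hright : (fun ω => r (X ω) * ind A ω)
      =ᵐ[P] fun ω => ind A ω * q (X ω) * (r (X ω) / q (X ω)) := by
    filter_upwards [hq0] with ω hω
    by_cases hA : ω ∈ A
    · rw [mul_assoc, mul_div_cancel₀ _ (hω hA), mul_comm]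
    · simp [ind, hA]
  rw [hleft] at hZr ⊢
  rw [integral_congr_ae hright]
  exact hq.integral_mul_comp hX (hr.div hq.1) hZr (hri.congr hright)

lemma IsCondMeanGiven.integral_n4_mul_comp {D2 S : Ω → ℝ} {d2 : ℝ} {q πc g : 𝓧 → ℝ}
    (hq : IsCondMeanGiven P X (evD2 D2 d2) S q) (hX : Measurable X)
    (hq0 : ∀ᵐ ω ∂P, D2 ω = d2 → q (X ω) ≠ 0) (hπc : Measurable πc) (hg : Measurable g)
    (hn3g : Integrable (fun ω => n3 X D2 πc d2 ω * g (X ω)) P)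
    (hn4g : Integrable (fun ω => n4 X D2 S q πc d2 ω * g (X ω)) P) :
    ∫ ω, n4 X D2 S q πc d2 ω * g (X ω) ∂P = ∫ ω, n3 X D2 πc d2 ω * g (X ω) ∂P := by
  have hn3 (ω : Ω) : n3 X D2 πc d2 ω * g (X ω)
      = πc (X ω) * g (X ω) * ind (evD2 D2 d2) ω := by
    rw [n3]; ring
  have hn4 (ω : Ω) : n4 X D2 S q πc d2 ω * g (X ω)
      = S ω / q (X ω) * (πc (X ω) * g (X ω)) * ind (evD2 D2 d2) ω := by
    rw [n4]; ring
  simp only [hn3, hn4] at hn3g hn4g ⊢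
  exact hq.integral_div_mul_comp hX (hπc.mul hg) hq0 hn4g hn3g

lemma integrable_mul_comp_of_bounded (hX : Measurable X) {N : Ω → ℝ} (hN : Integrable N P)
    {g : 𝓧 → ℝ} (hg : Measurable g) (hgb : ∃ C, ∀ x, |g x| ≤ C) :
    Integrable (fun ω => N ω * g (X ω)) P :=
  let ⟨_, hC⟩ := hgb
  hN.mul_bdd (hg.comp hX).aestronglyMeasurable (.of_forall fun ω => hC (X ω))

theorem statement_18_general (hX : Measurable X) {D2 S : Ω → ℝ} {d2 : ℝ} {q πc g : 𝓧 → ℝ}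
    (hq : IsCondMeanGiven P X (evD2 D2 d2) S q)
    (hq0 : ∀ᵐ ω ∂P, D2 ω = d2 → q (X ω) ≠ 0) (hπc : Measurable πc)
    (hn3i : Integrable (n3 X D2 πc d2) P) (hn3 : ∫ ω, n3 X D2 πc d2 ω ∂P ≠ 0)
    (hn4i : Integrable (n4 X D2 S q πc d2) P) (hg : Measurable g)
    (hn3g : Integrable (fun ω => n3 X D2 πc d2 ω * g (X ω)) P)
    (hn4g : Integrable (fun ω => n4 X D2 S q πc d2 ω * g (X ω)) P) :
    ∫ ω, (n3 X D2 πc d2 ω / ∫ ω', n3 X D2 πc d2 ω' ∂P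
          - n4 X D2 S q πc d2 ω / ∫ ω', n4 X D2 S q πc d2 ω' ∂P)
        * g (X ω) ∂P = 0 := by
  have hnormalizer : ∫ ω, n4 X D2 S q πc d2 ω ∂P = ∫ ω, n3 X D2 πc d2 ω ∂P := by
    simpa using hq.integral_n4_mul_comp (g := fun _ => 1) hX hq0 hπc measurable_const
      (by simpa using hn3i) (by simpa using hn4i)
  simp only [hnormalizer, ← sub_div, div_mul_eq_mul_div, sub_mul]
  rw [integral_div, div_eq_iff hn3, zero_mul, integral_sub hn3g hn4g,
    hq.integral_n4_mul_comp hX hq0 hπc hg hn3g hn4g, sub_self]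

end

/-- Vanishing of the adjustment term `E[(w₃ − w₄) · g(X)]` when the missing-data model
is correct. -/
theorem statement_18
    [MeasurableSpace Ω] [m𝓧 : MeasurableSpace 𝓧]
    (P : Measure Ω) [IsProbabilityMeasure P]
    (X : Ω → 𝓧) (hX : Measurable X)
    (Y0 Y2 D1 D2 S : Ω → ℝ)
    (hY0 : Measurable Y0) (hY2 : Measurable Y2)
    (hD1 : Measurable D1) (hD2 : Measurable D2) (hS : Measurable S)
    (hY0i : Integrable Y0 P) (hY2i : Integrable Y2 P)
    (hD1v : ∀ ω, D1 ω = 0 ∨ D1 ω = 1) (hD2v : ∀ ω, D2 ω = 0 ∨ D2 ω = 1)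
    (hSv : ∀ ω, S ω = 0 ∨ S ω = 1)
    (d2 : ℝ) (hd2 : d2 ∈ ({0, 1} : Set ℝ)) (hPd2 : 0 < P (evD2 D2 d2))
    (q : ℝ → 𝓧 → ℝ) (hMAR : MAR P X D1 D2 S Y0 Y2 q)
    (πc : 𝓧 → ℝ) (hπcm : Measurable πc) (hπcv : ∀ x, 0 < πc x ∧ πc x < 1)
    (hn3i : Integrable (n3 X D2 πc d2) P)
    (hn3pos : 0 < ∫ ω, n3 X D2 πc d2 ω ∂P)
    (hn4i : Integrable (n4 X D2 S (q d2) πc d2) P)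
    (hn4pos : 0 < ∫ ω, n4 X D2 S (q d2) πc d2 ω ∂P) :
    ∀ g : 𝓧 → ℝ, Measurable g → (∃ C, ∀ x, |g x| ≤ C) →
      ∫ ω, (n3 X D2 πc d2 ω / ∫ ω', n3 X D2 πc d2 ω' ∂P
            - n4 X D2 S (q d2) πc d2 ω / ∫ ω', n4 X D2 S (q d2) πc d2 ω' ∂P)
          * g (X ω) ∂P = 0 := by
  intro g hg hgb
  exact statement_18_general hX (hMAR.1 d2 hd2)
    ((hMAR.2.1 d2 hd2).mono fun _ hq _ => hq.1.ne') hπcm hn3i hn3pos.ne' hn4i hg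
    (integrable_mul_comp_of_bounded hX hn3i hg hgb) (integrable_mul_comp_of_bounded hX hn4i hg hgb)

end DIDMissing
end
end
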